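/- With the same support and nonnegativity assumptions as in the Lipschitz lemma, the first term satisfies ‖F(δλ, μ₁) − F(δλ, μ₂)‖²_{L²(ℝ×S¹)} ≤ 4π r_Ω ‖δλ‖²_{L²} ‖μ₂ − μ₁‖²_{L²}. -/

import Mathlib

open MeasureTheory Real

noncomputable section

/-- Direction vector `θ ↦ (cos θ, sin θ)` in the Euclidean plane. -/
def dir (θ : ℝ) : EuclideanSpace ℝ (Fin 2) :=
  (WithLp.equiv 2 (Fin 2 → ℝ)).symm ![Real.cos θ, Real.sin θ]

/-- Perpendicular direction `θ ↦ (-sin θ, cos θ)`. -/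
def perp (θ : ℝ) : EuclideanSpace ℝ (Fin 2) :=
  (WithLp.equiv 2 (Fin 2 → ℝ)).symm ![-Real.sin θ, Real.cos θ]

/-- Point on the line with offset `s` and angle `θ` at parameter `t`. -/
def linePt (s θ t : ℝ) : EuclideanSpace ℝ (Fin 2) := s • perp θ + t • dir θ

/-- The beam transform `Bμ(x, θ) = ∫₀^∞ μ(x + τθ) dτ`. -/
def beam (μ : EuclideanSpace ℝ (Fin 2) → ℝ) (x : EuclideanSpace ℝ (Fin 2)) (θ : ℝ) : ℝ :=
  ∫ τ in Set.Ioi (0 : ℝ), μ (x + τ • dir θ)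

/-- The attenuated Radon transform
`F(λ, μ)(s, θ) = ∫ λ(sθ^⊥ + tθ) exp(-Bμ(sθ^⊥ + tθ, θ)) dt`. -/
def radonF (lam μ : EuclideanSpace ℝ (Fin 2) → ℝ) (s θ : ℝ) : ℝ :=
  ∫ t : ℝ, lam (linePt s θ t) * Real.exp (-(beam μ (linePt s θ t) θ))

/-- The second component of the Fréchet derivative:
`(s, θ) ↦ ∫ λ(γ(t)) B(δμ)(γ(t), θ) exp(-Bμ(γ(t), θ)) dt`, i.e. `F(λ·B(δμ), μ)`. -/
def radonFB (lam μ δμ : EuclideanSpace ℝ (Fin 2) → ℝ) (s θ : ℝ) : ℝ :=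
  ∫ t : ℝ, lam (linePt s θ t) * beam δμ (linePt s θ t) θ *
    Real.exp (-(beam μ (linePt s θ t) θ))

/-- Squared L² norm on the plane. -/
def l2sq (f : EuclideanSpace ℝ (Fin 2) → ℝ) : ℝ := ∫ x, f x ^ 2

/-- L² norm on the plane. -/
def l2 (f : EuclideanSpace ℝ (Fin 2) → ℝ) : ℝ := Real.sqrt (l2sq f)

/-- Squared L² norm on the data space `ℝ × S¹`. -/
def dataNormSq (g : ℝ → ℝ → ℝ) : ℝ := ∫ θ in (0 : ℝ)..(2 * π), ∫ s : ℝ, g s θ ^ 2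

/-- Sup norm of a function on the plane. -/
def supNorm (f : EuclideanSpace ℝ (Fin 2) → ℝ) : ℝ := ⨆ x, |f x|

/-- Admissible maps: nonnegative, bounded, measurable, supported in `B(0, rΩ)`. -/
def Admissible (rΩ : ℝ) (f : EuclideanSpace ℝ (Fin 2) → ℝ) : Prop :=
  Measurable f ∧ (∀ x, 0 ≤ f x) ∧ (∃ C, ∀ x, f x ≤ C) ∧
    Function.support f ⊆ Metric.closedBall 0 rΩ

section Plancherel

open scoped ENNReal FourierTransform ContDiff

variable {V : Type*} [NormedAddCommGroup V] [InnerProductSpace ℝ V] [FiniteDimensional ℝ V]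
  [MeasurableSpace V] [BorelSpace V]

theorem continuous_fourier_of_integrable {f : V → ℂ} (hf : Integrable f) : Continuous (𝓕 f) :=
  VectorFourier.fourierIntegral_continuous Real.continuous_fourierChar (innerSL ℝ).continuous₂ hf

/-- The `L²` Fourier transform of an integrable function is given by the Fourier integral. -/
theorem coeFn_fourier_toLp {f : V → ℂ} (h1 : Integrable f) (h2 : MemLp f 2) :
    (𝓕 (h2.toLp f) : Lp ℂ 2 (volume : Measure V)) =ᵐ[volume] 𝓕 f := by
  refine ae_eq_of_integral_contDiff_smul_eq ((Lp.memLp _).locallyIntegrable (by norm_num))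
    (continuous_fourier_of_integrable h1).locallyIntegrable fun g hg hgc => ?_
  have hg₁ : HasCompactSupport (Complex.ofRealCLM ∘ g) := hgc.comp_left rfl
  have hg₂ : ContDiff ℝ ∞ (Complex.ofRealCLM ∘ g) := by fun_prop
  set G : SchwartzMap V ℂ := hg₁.toSchwartzMap hg₂ with hG
  have hGg : ∀ x, G x = (g x : ℂ) := fun x => rfl
  have key := DFunLike.congr_fun (Lp.fourier_toTemperedDistribution_eq (h2.toLp f)) G
  rw [TemperedDistribution.fourier_apply, Lp.toTemperedDistribution_apply,
    Lp.toTemperedDistribution_apply] at key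
  have e1 : ∀ (h : V → ℂ), ∫ x, g x • h x = ∫ x, G x • h x := by
    intro h; simp [hGg]
  rw [e1, e1, ← key]
  have e2 : ∫ x, (𝓕 G) x • (h2.toLp f : V → ℂ) x = ∫ x, (𝓕 (G : V → ℂ)) x • f x := by
    refine integral_congr_ae ?_
    filter_upwards [h2.coeFn_toLp] with x hx
    rw [hx, SchwartzMap.fourier_coe]
  rw [e2]
  exact VectorFourier.integral_fourierIntegral_smul_eq_flip (L := innerₗ V)
    Real.continuous_fourierChar (innerSL ℝ).continuous₂ G.integrable h1 |>.trans (by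
      simp only [flip_innerₗ]; rfl)

/-- Plancherel's theorem for functions in `L¹ ∩ L²`. -/
theorem lintegral_enorm_fourier_sq {f : V → ℂ} (h1 : Integrable f) (h2 : MemLp f 2) :
    ∫⁻ ξ, ‖𝓕 f ξ‖ₑ ^ 2 = ∫⁻ x, ‖f x‖ₑ ^ 2 := by
  have hsq : ∀ h : V → ℂ, eLpNorm h 2 volume ^ 2 = ∫⁻ x, ‖h x‖ₑ ^ 2 := fun h => by
    have := eLpNorm_nnreal_pow_eq_lintegral (f := h) (μ := volume) (p := 2) (by norm_num)
    simpa using this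
  rw [← hsq, ← hsq, ← eLpNorm_congr_ae (coeFn_fourier_toLp h1 h2),
    ← eLpNorm_congr_ae h2.coeFn_toLp, ← Lp.enorm_def, ← Lp.enorm_def]
  have := Lp.norm_fourier_eq (h2.toLp f)
  rw [← ofReal_norm, ← ofReal_norm, this]

/-- Parseval's identity for functions in `L¹ ∩ L²`. -/
theorem integral_inner_fourier {f g : V → ℂ} (hf1 : Integrable f) (hf2 : MemLp f 2)
    (hg1 : Integrable g) (hg2 : MemLp g 2) :
    ∫ ξ, inner ℂ (𝓕 f ξ) (𝓕 g ξ) = ∫ x, inner ℂ (f x) (g x) := by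
  have := Lp.inner_fourier_eq (hf2.toLp f) (hg2.toLp g)
  rw [L2.inner_def, L2.inner_def] at this
  rw [integral_congr_ae (g := fun x => inner ℂ ((𝓕 (hf2.toLp f) : Lp ℂ 2 (volume : Measure V)) x)
    ((𝓕 (hg2.toLp g) : Lp ℂ 2 (volume : Measure V)) x)), this]
  · refine integral_congr_ae ?_
    filter_upwards [hf2.coeFn_toLp, hg2.coeFn_toLp] with x h h'
    rw [h, h']
  · filter_upwards [coeFn_fourier_toLp hf1 hf2, coeFn_fourier_toLp hg1 hg2] with x h h'
    rw [h, h']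

end Plancherel

section Autocorrelation

open scoped ENNReal

variable {α β : Type*} [MeasurableSpace α] [MeasurableSpace β]

/-- The Cauchy–Schwarz inequality for the lower Lebesgue integral. -/
theorem sq_lintegral_mul_le {μ : Measure α} {f g : α → ℝ≥0∞} (hf : AEMeasurable f μ)
    (hg : AEMeasurable g μ) :
    (∫⁻ a, f a * g a ∂μ) ^ 2 ≤ (∫⁻ a, f a ^ 2 ∂μ) * ∫⁻ a, g a ^ 2 ∂μ := by
  have h := ENNReal.lintegral_mul_le_Lp_mul_Lq μ Real.HolderConjugate.two_two hf hg
  simp only [Pi.mul_apply, ENNReal.rpow_two] at h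
  have hs : ∀ x : ℝ≥0∞, (x ^ (1 / 2 : ℝ)) ^ 2 = x := fun x => by
    rw [← ENNReal.rpow_natCast, ← ENNReal.rpow_mul]; norm_num
  calc _ ≤ _ := pow_le_pow_left₀ zero_le h 2
    _ = _ := by rw [mul_pow, hs, hs]

theorem lintegral_sq_lintegral {μ : Measure α} {ν : Measure β} [SFinite μ] [SFinite ν]
    {k : α → β → ℝ≥0∞} (hk : Measurable (Function.uncurry k)) :
    ∫⁻ x, (∫⁻ a, k x a ∂ν) ^ 2 ∂μ = ∫⁻ a, ∫⁻ b, ∫⁻ x, k x a * k x b ∂μ ∂ν ∂ν := by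
  have h1 : ∀ x, (∫⁻ a, k x a ∂ν) ^ 2 = ∫⁻ a, ∫⁻ b, k x a * k x b ∂ν ∂ν := fun x => by
    have hm : Measurable (k x) := hk.comp measurable_prodMk_left
    simp_rw [lintegral_const_mul _ hm]
    rw [lintegral_mul_const _ hm, sq]
  have hk3 : Measurable fun q : (α × β) × β => k q.1.1 q.1.2 * k q.1.1 q.2 := by
    refine Measurable.mul (hk.comp measurable_fst)
      (hk.comp (f := fun q : (α × β) × β => (q.1.1, q.2)) ?_)
    fun_prop
  simp_rw [h1]
  rw [lintegral_lintegral_swap]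
  · refine lintegral_congr fun a => ?_
    rw [lintegral_lintegral_swap]
    exact (hk3.comp (f := fun q : α × β => ((q.1, a), q.2)) (by fun_prop)).aemeasurable
  · exact (Measurable.lintegral_prod_right' hk3).aemeasurable

/-- Self-convolution and autocorrelation have the same `L²` norm. -/
theorem lintegral_sq_convolution_eq_correlation {p : ℝ → ℝ≥0∞} (hp : Measurable p) :
    ∫⁻ x, (∫⁻ a, p a * p (x - a)) ^ 2 = ∫⁻ x, (∫⁻ a, p a * p (a - x)) ^ 2 := by
  rw [lintegral_sq_lintegral (k := fun x a => p a * p (x - a))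
      ((hp.comp measurable_snd).mul (hp.comp (measurable_fst.sub measurable_snd))),
    lintegral_sq_lintegral (k := fun x a => p a * p (a - x))
      ((hp.comp measurable_snd).mul (hp.comp (measurable_snd.sub measurable_fst)))]
  refine lintegral_congr fun a => lintegral_congr fun b => ?_
  rw [← lintegral_add_right_eq_self _ a,
    ← lintegral_sub_left_eq_self (fun x => p a * p (a - x) * (p b * p (b - x))) b]
  refine lintegral_congr fun x => ?_
  rw [show x + a - a = x by ring, show x + a - b = a - (b - x) by ring,
    show b - (b - x) = x by ring]
  ring

theorem lintegral_sq_convolution_le {p : ℝ → ℝ≥0∞} (hp : Measurable p)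
    (hp0 : ∀ x ≤ 0, p x = 0) :
    ∫⁻ x, (∫⁻ a, p a * p (x - a)) ^ 2 ≤
      2 * (∫⁻ x, ENNReal.ofReal x * p x ^ 2) * ∫⁻ x, p x ^ 2 := by
  have hpp : Measurable fun q : ℝ × ℝ => p q.2 * p (q.1 - q.2) :=
    (hp.comp measurable_snd).mul (hp.comp (measurable_fst.sub measurable_snd))
  have h1 : ∀ x : ℝ, (∫⁻ a, p a * p (x - a)) ^ 2 ≤
      ∫⁻ a, ENNReal.ofReal x * (p a * p (x - a)) ^ 2 := fun x => by
    have hm : Measurable fun a => p a * p (x - a) := hpp.comp measurable_prodMk_left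
    rw [lintegral_const_mul _ (hm.pow_const 2)]
    calc (∫⁻ a, p a * p (x - a)) ^ 2
        = (∫⁻ a, (Set.Ioc 0 x).indicator 1 a * (p a * p (x - a))) ^ 2 := by
          congr 1
          refine lintegral_congr fun a => ?_
          by_cases ha : a ∈ Set.Ioc 0 x
          · simp [ha]
          · rw [Set.indicator_of_notMem ha, zero_mul]
            rcases le_or_gt a 0 with h | h
            · rw [hp0 a h, zero_mul]
            · rw [hp0 (x - a), mul_zero]
              by_contra! hlt
              exact ha ⟨h, by linarith⟩
      _ ≤ (∫⁻ a, (Set.Ioc 0 x).indicator (1 : ℝ → ℝ≥0∞) a ^ 2) *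
            ∫⁻ a, (p a * p (x - a)) ^ 2 :=
          sq_lintegral_mul_le (measurable_one.indicator measurableSet_Ioc).aemeasurable hm.aemeasurable
      _ = _ := by
          congr 1
          have : ∀ a, (Set.Ioc 0 x).indicator (1 : ℝ → ℝ≥0∞) a ^ 2 =
              (Set.Ioc 0 x).indicator 1 a := fun a => by
            by_cases ha : a ∈ Set.Ioc 0 x <;> simp [ha]
          simp_rw [this]
          rw [lintegral_indicator_one measurableSet_Ioc]
          simp
  have hE : Measurable fun x : ℝ => ENNReal.ofReal x * p x ^ 2 := by fun_prop
  calc _ ≤ ∫⁻ x : ℝ, ∫⁻ a, ENNReal.ofReal x * (p a * p (x - a)) ^ 2 := lintegral_mono h1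
    _ = ∫⁻ a, ∫⁻ x : ℝ, ENNReal.ofReal x * (p a * p (x - a)) ^ 2 := by
        refine lintegral_lintegral_swap (Measurable.aemeasurable ?_)
        exact (ENNReal.measurable_ofReal.comp measurable_fst).mul (hpp.pow_const 2)
    _ ≤ ∫⁻ a, ∫⁻ x : ℝ, ((ENNReal.ofReal a * p a ^ 2) * p x ^ 2 +
          p a ^ 2 * (ENNReal.ofReal x * p x ^ 2)) := by
        refine lintegral_mono fun a => ?_
        dsimp only
        rw [← lintegral_add_right_eq_self _ a]
        refine lintegral_mono fun x => ?_
        dsimp only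
        rw [add_sub_cancel_right]
        calc _ ≤ (ENNReal.ofReal x + ENNReal.ofReal a) * (p a * p x) ^ 2 :=
              mul_le_mul_left ENNReal.ofReal_add_le _
          _ = _ := by ring
    _ = _ := by
        simp_rw [lintegral_add_right _ (hE.const_mul _),
          lintegral_const_mul _ (hp.pow_const 2), lintegral_const_mul _ hE]
        rw [lintegral_add_left (hE.mul_const _), lintegral_mul_const _ hE,
          lintegral_mul_const _ (hp.pow_const 2)]
        ring

theorem lintegral_even {J : ℝ → ℝ≥0∞} (hJ : ∀ x, J (-x) = J x) :
    ∫⁻ x, J x = 2 * ∫⁻ x in Set.Ioi 0, J x := by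
  rw [← lintegral_add_compl J (measurableSet_Ioi (a := (0 : ℝ))), two_mul, Set.compl_Ioi,
    setLIntegral_congr (Iio_ae_eq_Iic (μ := volume) (a := (0 : ℝ))).symm]
  congr 1
  have := (Measure.measurePreserving_neg (volume : Measure ℝ)).setLIntegral_comp_preimage_emb
    (MeasurableEquiv.neg ℝ).measurableEmbedding J (Set.Iio 0)
  rw [← this]
  simp [hJ]

theorem lintegral_sq_autoconvolution_even_le {φ : ℝ → ℝ≥0∞} (hφ : Measurable φ)
    (heven : ∀ x, φ (-x) = φ x) :
    ∫⁻ x, (∫⁻ a, φ a * φ (x - a)) ^ 2 ≤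
      12 * (∫⁻ x in Set.Ioi 0, ENNReal.ofReal x * φ x ^ 2) * ∫⁻ x, φ x ^ 2 := by
  set p : ℝ → ℝ≥0∞ := (Set.Ioi 0).indicator φ with hpdef
  have hp : Measurable p := hφ.indicator measurableSet_Ioi
  have hp0 : ∀ x ≤ 0, p x = 0 := fun x hx => Set.indicator_of_notMem (by simpa using hx) _
  have hp1 : ∀ x, 0 < x → p x = φ x := fun x hx => Set.indicator_of_mem (by simpa using hx) _
  have hsum : ∀ x, x ≠ 0 → φ x = p x + p (-x) := fun x hx => by
    rcases lt_or_gt_of_ne hx with h | h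
    · rw [hp0 x h.le, hp1 (-x) (by linarith), zero_add, heven]
    · rw [hp1 x h, hp0 (-x) (by linarith), add_zero]
  set P : ℝ → ℝ≥0∞ := fun x => ∫⁻ a, p a * p (x - a) with hP
  set Q : ℝ → ℝ≥0∞ := fun x => ∫⁻ a, p a * p (a - x) with hQ
  have hPm : Measurable P := Measurable.lintegral_prod_right'
    (f := fun q : ℝ × ℝ => p q.2 * p (q.1 - q.2))
    ((hp.comp measurable_snd).mul (hp.comp (measurable_fst.sub measurable_snd)))
  have hQm : Measurable Q := Measurable.lintegral_prod_right'
    (f := fun q : ℝ × ℝ => p q.2 * p (q.2 - q.1))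
    ((hp.comp measurable_snd).mul (hp.comp (measurable_snd.sub measurable_fst)))
  have hQeven : ∀ x, Q (-x) = Q x := fun x => by
    simp only [hQ]
    rw [← lintegral_sub_right_eq_self _ x]
    refine lintegral_congr fun a => ?_
    rw [show a - x - -x = a by ring, mul_comm]
  have hJeven : ∀ x, (∫⁻ a, φ a * φ (-x - a)) ^ 2 = (∫⁻ a, φ a * φ (x - a)) ^ 2 := fun x => by
    rw [← lintegral_neg_eq_self]
    congr 1
    refine lintegral_congr fun a => ?_
    rw [heven, show -x - -a = -(x - a) by ring, heven]
  have hJ : ∀ x, 0 < x → ∫⁻ a, φ a * φ (x - a) = P x + 2 * Q x := fun x hx => by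
    have hne : ∀ y : ℝ, ∀ᵐ a : ℝ, a ≠ y := fun y => Measure.ae_ne volume y
    have hm1 : Measurable fun a => p a * p (x - a) :=
      hp.mul (hp.comp (measurable_const.sub measurable_id))
    have hm2 : Measurable fun a => p a * p (a - x) :=
      hp.mul (hp.comp (measurable_id.sub measurable_const))
    have hm12 : Measurable fun a => p a * p (x - a) + p a * p (a - x) := hm1.add hm2
    have hQ' : ∫⁻ a, p (-a) * p (x - a) = Q x := by
      rw [← lintegral_sub_left_eq_self _ x]
      refine lintegral_congr fun a => ?_
      rw [show -(x - a) = a - x by ring, show x - (x - a) = a by ring, mul_comm]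
    calc ∫⁻ a, φ a * φ (x - a)
        = ∫⁻ a, ((p a * p (x - a) + p a * p (a - x)) + p (-a) * p (x - a)) := by
          refine lintegral_congr_ae ?_
          filter_upwards [hne 0, hne x] with a ha hax
          rw [hsum a ha, hsum (x - a) (sub_ne_zero.2 hax.symm), neg_sub]
          have : p (-a) * p (a - x) = 0 := by
            rcases le_or_gt a 0 with h | h
            · rw [hp0 (a - x) (by linarith), mul_zero]
            · rw [hp0 (-a) (by linarith), zero_mul]
          rw [add_mul, mul_add, mul_add, this, add_zero]
      _ = _ := by
          rw [lintegral_add_left hm12, lintegral_add_left hm1, hQ', two_mul, add_assoc]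
  have hN : ∫⁻ x, Q x ^ 2 = ∫⁻ x, P x ^ 2 := (lintegral_sq_convolution_eq_correlation hp).symm
  have hsq : ∀ a b : ℝ≥0∞, (a + 2 * b) ^ 2 ≤ 2 * a ^ 2 + 8 * b ^ 2 := fun a b => by
    have := ENNReal.rpow_add_le_mul_rpow_add_rpow a (2 * b) (p := 2) one_le_two
    norm_num [ENNReal.rpow_two] at this
    calc _ ≤ _ := this
      _ = _ := by ring
  have hE : ∫⁻ x, ENNReal.ofReal x * p x ^ 2 =
      ∫⁻ x in Set.Ioi 0, ENNReal.ofReal x * φ x ^ 2 := by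
    rw [← lintegral_indicator measurableSet_Ioi]
    refine lintegral_congr fun x => ?_
    by_cases hx : x ∈ Set.Ioi (0 : ℝ) <;> simp [hpdef, hx]
  have hM : ∫⁻ x, φ x ^ 2 = 2 * ∫⁻ x, p x ^ 2 := by
    rw [lintegral_even (J := fun x => φ x ^ 2) fun x => by rw [heven],
      ← lintegral_indicator measurableSet_Ioi]
    congr 1
    refine lintegral_congr fun x => ?_
    by_cases hx : x ∈ Set.Ioi (0 : ℝ) <;> simp [hpdef, hx]
  calc ∫⁻ x, (∫⁻ a, φ a * φ (x - a)) ^ 2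
      = 2 * ∫⁻ x in Set.Ioi 0, (P x + 2 * Q x) ^ 2 := by
        rw [lintegral_even hJeven]
        congr 1
        exact setLIntegral_congr_fun measurableSet_Ioi fun x hx => by rw [hJ x hx]
    _ ≤ 2 * ∫⁻ x in Set.Ioi 0, (2 * P x ^ 2 + 8 * Q x ^ 2) := by
        gcongr
        exact hsq _ _
    _ = 4 * (∫⁻ x in Set.Ioi 0, P x ^ 2) + 8 * ∫⁻ x, Q x ^ 2 := by
        rw [lintegral_even (J := fun x => Q x ^ 2) fun x => by rw [hQeven],
          lintegral_add_left ((hPm.pow_const 2).const_mul _),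
          lintegral_const_mul _ (hPm.pow_const 2), lintegral_const_mul _ (hQm.pow_const 2)]
        ring
    _ ≤ 4 * (∫⁻ x, P x ^ 2) + 8 * ∫⁻ x, P x ^ 2 := by
        rw [hN]
        gcongr
        exact Measure.restrict_le_self
    _ = 12 * ∫⁻ x, P x ^ 2 := by ring
    _ ≤ 12 * (2 * (∫⁻ x, ENNReal.ofReal x * p x ^ 2) * ∫⁻ x, p x ^ 2) := by
        gcongr
        exact lintegral_sq_convolution_le hp hp0
    _ = _ := by rw [hE, hM]; ring

end Autocorrelation

section FourthPower

open scoped ENNReal FourierTransform ComplexConjugate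

theorem fourier_ofReal_neg (u : ℝ → ℝ) (x : ℝ) :
    𝓕 (fun s => (u s : ℂ)) (-x) = conj (𝓕 (fun s => (u s : ℂ)) x) := by
  rw [Real.fourier_real_eq, Real.fourier_real_eq, ← integral_conj]
  refine integral_congr_ae (.of_forall fun s => ?_)
  simp only [Circle.smul_def, smul_eq_mul, map_mul, Complex.conj_ofReal]
  rw [← Circle.coe_inv_eq_conj, ← AddChar.map_neg_eq_inv]
  ring_nf

theorem fourier_char_smul (f : ℝ → ℂ) (x a : ℝ) :
    𝓕 (fun s => Real.fourierChar (s * x) • f s) a = 𝓕 f (a - x) := by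
  rw [Real.fourier_real_eq, Real.fourier_real_eq]
  refine integral_congr_ae (.of_forall fun s => ?_)
  simp only [smul_smul, ← AddChar.map_add_eq_mul]
  ring_nf

theorem enorm_fourier_ofReal_neg (u : ℝ → ℝ) (x : ℝ) :
    ‖𝓕 (fun s => (u s : ℂ)) (-x)‖ₑ = ‖𝓕 (fun s => (u s : ℂ)) x‖ₑ := by
  rw [fourier_ofReal_neg, ← ofReal_norm, ← ofReal_norm, Complex.norm_conj]

theorem enorm_fourier_sq_le {u : ℝ → ℝ} (h1 : Integrable u) (h2 : MemLp u 2) (x : ℝ) :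
    ‖𝓕 (fun s => ((u s ^ 2 : ℝ) : ℂ)) x‖ₑ ≤
      ∫⁻ a, ‖𝓕 (fun s => (u s : ℂ)) a‖ₑ * ‖𝓕 (fun s => (u s : ℂ)) (x - a)‖ₑ := by
  set U : ℝ → ℂ := fun s => (u s : ℂ) with hU
  have hU1 : Integrable U := h1.ofReal
  have hU2 : MemLp U 2 := h2.ofReal
  have hchar : Continuous fun s : ℝ => Real.fourierChar (s * x) :=
    Real.continuous_fourierChar.comp (continuous_id.mul continuous_const)
  have hm : AEStronglyMeasurable (fun s => Real.fourierChar (s * x) • U s) volume := by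
    simp only [Circle.smul_def]
    exact ((continuous_subtype_val.comp hchar).aestronglyMeasurable).smul hU1.1
  have hV1 : Integrable fun s => Real.fourierChar (s * x) • U s :=
    hU1.congr' hm (.of_forall fun s => by simp)
  have hV2 : MemLp (fun s => Real.fourierChar (s * x) • U s) 2 :=
    hU2.congr_norm hm (.of_forall fun s => by simp)
  have hpar := integral_inner_fourier hV1 hV2 hU1 hU2
  have hleft : 𝓕 (fun s => ((u s ^ 2 : ℝ) : ℂ)) x =
      ∫ s, inner ℂ (Real.fourierChar (s * x) • U s) (U s) := by
    rw [Real.fourier_real_eq]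
    refine integral_congr_ae (.of_forall fun s => ?_)
    simp only [Circle.smul_def, smul_eq_mul, RCLike.inner_apply, map_mul, hU, Complex.conj_ofReal,
      AddChar.map_neg_eq_inv, Circle.coe_inv_eq_conj]
    push_cast
    ring
  rw [hleft, ← hpar]
  refine (enorm_integral_le_lintegral_enorm _).trans (lintegral_mono fun a => ?_)
  rw [fourier_char_smul, ← neg_sub x a, fourier_ofReal_neg, RCLike.inner_apply, enorm_mul]
  simp [hU]

/-- A Gagliardo–Nirenberg inequality for the half-derivative on the real line. -/
theorem lintegral_enorm_pow_four_le {u : ℝ → ℝ} (h1 : Integrable u) {C : ℝ}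
    (hC : ∀ s, ‖u s‖ ≤ C) :
    ∫⁻ s, ‖u s‖ₑ ^ 4 ≤
      12 * (∫⁻ x in Set.Ioi 0, ENNReal.ofReal x * ‖𝓕 (fun s => (u s : ℂ)) x‖ₑ ^ 2) *
        ∫⁻ s, ‖u s‖ₑ ^ 2 := by
  have hmul : ∀ {v : ℝ → ℝ}, Integrable v → Integrable fun s => u s * v s := fun hv =>
    hv.bdd_mul h1.1 (.of_forall hC)
  have h2 : MemLp u 2 := (memLp_two_iff_integrable_sq h1.1).2 <| by
    simpa only [sq] using hmul h1
  have hs1 : Integrable fun s => u s ^ 2 := by simpa only [sq] using hmul h1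
  have hs2 : MemLp (fun s => u s ^ 2) 2 := (memLp_two_iff_integrable_sq hs1.1).2 <| by
    refine (hmul (hmul (hmul h1))).congr (.of_forall fun s => ?_)
    ring
  have hre : ∀ x : ℝ, ‖(x : ℂ)‖ₑ = ‖x‖ₑ := fun x => by
    rw [← ofReal_norm, ← ofReal_norm, Complex.norm_real]
  have hU1 : Integrable fun s => (u s : ℂ) := h1.ofReal
  have hU2 : MemLp (fun s => (u s : ℂ)) 2 := h2.ofReal
  have hS1 : Integrable fun s => ((u s ^ 2 : ℝ) : ℂ) := hs1.ofReal
  have hS2 : MemLp (fun s => ((u s ^ 2 : ℝ) : ℂ)) 2 := hs2.ofReal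
  have hplU := lintegral_enorm_fourier_sq hU1 hU2
  have hplS := lintegral_enorm_fourier_sq hS1 hS2
  have hφ : Measurable fun x => ‖𝓕 (fun s => (u s : ℂ)) x‖ₑ :=
    (continuous_fourier_of_integrable hU1).measurable.enorm
  have hconv := lintegral_sq_autoconvolution_even_le hφ (enorm_fourier_ofReal_neg u)
  rw [hplU] at hconv
  simp only [hre] at hconv hplS
  simp only [enorm_pow, ← pow_mul] at hplS
  rw [← hplS]
  refine le_trans ?_ hconv
  exact lintegral_mono fun x => pow_le_pow_left₀ zero_le (enorm_fourier_sq_le h1 h2 x) 2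

end FourthPower

section Lines

open scoped ENNReal FourierTransform

local notation "Plane" => EuclideanSpace ℝ (Fin 2)

theorem linePt_apply_zero (s θ t : ℝ) : linePt s θ t 0 = -s * sin θ + t * cos θ := by
  simp [linePt, perp, dir]

theorem linePt_apply_one (s θ t : ℝ) : linePt s θ t 1 = s * cos θ + t * sin θ := by
  simp [linePt, perp, dir]

theorem norm_linePt_sq (s θ t : ℝ) : ‖linePt s θ t‖ ^ 2 = s ^ 2 + t ^ 2 := by
  rw [EuclideanSpace.real_norm_sq_eq, Fin.sum_univ_two, linePt_apply_zero, linePt_apply_one]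
  linear_combination (s ^ 2 + t ^ 2) * sin_sq_add_cos_sq θ

theorem inner_linePt_perp (s θ t x : ℝ) : inner ℝ (linePt s θ t) (x • perp θ) = s * x := by
  rw [PiLp.inner_apply, Fin.sum_univ_two, linePt_apply_zero, linePt_apply_one]
  simp [perp]
  linear_combination s * x * sin_sq_add_cos_sq θ

theorem linePt_add_smul_dir (s θ t τ : ℝ) : linePt s θ t + τ • dir θ = linePt s θ (t + τ) := by
  simp only [linePt]; module

theorem linePt_add_pi (s θ t : ℝ) : linePt s (θ + π) t = linePt (-s) θ (-t) := by
  ext i; fin_cases i <;> simp [linePt, perp, dir]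

theorem linePt_add_two_pi (s θ t : ℝ) : linePt s (θ + 2 * π) t = linePt s θ t := by
  rw [two_mul, ← add_assoc, linePt_add_pi, linePt_add_pi, neg_neg, neg_neg]

@[fun_prop]
theorem continuous_linePt : Continuous fun q : ℝ × ℝ × ℝ => linePt q.1 q.2.1 q.2.2 := by
  have h1 : Continuous perp := (PiLp.continuous_toLp 2 _).comp <| continuous_pi fun i => by
    fin_cases i <;> simp <;> fun_prop
  have h2 : Continuous dir := (PiLp.continuous_toLp 2 _).comp <| continuous_pi fun i => by
    fin_cases i <;> simp <;> fun_prop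
  unfold linePt
  fun_prop

/-- The isometry of the plane taking the standard basis to `perp θ`, `dir θ`. -/
def lineIsometry (θ : ℝ) : Plane ≃ₗᵢ[ℝ] Plane :=
  LinearIsometry.toLinearIsometryEquiv
    { toFun := fun x => linePt (x 0) θ (x 1)
      map_add' := fun x y => by simp only [linePt, PiLp.add_apply]; module
      map_smul' := fun c x => by
        simp only [linePt, PiLp.smul_apply, smul_eq_mul, RingHom.id_apply]
        module
      norm_map' := fun x => by
        rw [← sq_eq_sq₀ (norm_nonneg _) (norm_nonneg _), EuclideanSpace.real_norm_sq_eq x,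
          Fin.sum_univ_two]
        exact norm_linePt_sq _ _ _ } rfl

/-- Line coordinates `(s, t) ↦ s θ^⊥ + t θ` as a measurable equivalence. -/
def lineEquiv (θ : ℝ) : ℝ × ℝ ≃ᵐ Plane :=
  (MeasurableEquiv.finTwoArrow.symm.trans (MeasurableEquiv.toLp 2 (Fin 2 → ℝ))).trans
    (lineIsometry θ).toMeasurableEquiv

theorem lineEquiv_apply (θ : ℝ) (q : ℝ × ℝ) : lineEquiv θ q = linePt q.1 θ q.2 := rfl

theorem measurePreserving_lineEquiv (θ : ℝ) : MeasurePreserving (lineEquiv θ) :=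
  (lineIsometry θ).measurePreserving.comp <|
    (PiLp.volume_preserving_toLp (Fin 2)).comp (volume_preserving_finTwoArrow ℝ).symm

theorem lintegral_linePt {g : Plane → ℝ≥0∞} (hg : Measurable g) (θ : ℝ) :
    ∫⁻ s, ∫⁻ t, g (linePt s θ t) = ∫⁻ x, g x := by
  rw [← (measurePreserving_lineEquiv θ).lintegral_comp hg, Measure.volume_eq_prod,
    lintegral_prod (fun q => g (lineEquiv θ q)) (hg.comp (lineEquiv θ).measurable).aemeasurable]
  rfl

theorem integrable_linePt {f : Plane → ℝ} (hf : Integrable f) (θ : ℝ) :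
    Integrable (fun q : ℝ × ℝ => f (linePt q.1 θ q.2)) (volume.prod volume) :=
  (measurePreserving_lineEquiv θ).integrable_comp_of_integrable hf

/-- The Fourier slice theorem. -/
theorem fourier_integral_linePt {f : Plane → ℝ} (hf : Integrable f) (θ x : ℝ) :
    𝓕 (fun s => ((∫ t, f (linePt s θ t) : ℝ) : ℂ)) x = 𝓕 (fun y => (f y : ℂ)) (x • perp θ) := by
  rw [Real.fourier_real_eq, Real.fourier_eq]
  rw [← (measurePreserving_lineEquiv θ).integral_comp' _, Measure.volume_eq_prod,
    integral_prod]
  · refine integral_congr_ae (.of_forall fun s => ?_)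
    simp only [lineEquiv_apply, inner_linePt_perp, Circle.smul_def]
    rw [integral_smul]
    congr 1
    exact integral_ofReal.symm
  · have := (integrable_linePt hf θ).ofReal (𝕜 := ℂ)
    refine this.congr' ?_ (.of_forall fun q => by simp [lineEquiv_apply])
    simp only [lineEquiv_apply, inner_linePt_perp, Circle.smul_def]
    have hc : Continuous fun q : ℝ × ℝ => (Real.fourierChar (-(q.1 * x)) : ℂ) :=
      continuous_subtype_val.comp (Real.continuous_fourierChar.comp (by fun_prop))
    exact hc.aestronglyMeasurable.smul this.1

/-- Integration in polar coordinates. -/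
theorem lintegral_polar_perp {g : Plane → ℝ≥0∞} (hg : Measurable g) :
    ∫⁻ θ in Set.Ioc (-π) π, ∫⁻ r in Set.Ioi (0 : ℝ), ENNReal.ofReal r * g (r • perp θ) =
      ∫⁻ x, g x := by
  have hperp : ∀ r θ : ℝ, linePt (r * cos θ) 0 (r * sin θ) = r • perp (-θ) := fun r θ => by
    ext i; fin_cases i <;> simp [linePt, perp, dir]
  have hmeas : Measurable fun q : ℝ × ℝ => ENNReal.ofReal q.1 * g (q.1 • perp (-q.2)) := by
    simp_rw [← hperp]
    refine (ENNReal.measurable_ofReal.comp measurable_fst).mul (hg.comp ?_)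
    exact (continuous_linePt.comp (g := fun q : ℝ × ℝ × ℝ => linePt q.1 q.2.1 q.2.2)
      (f := fun q : ℝ × ℝ => (q.1 * cos q.2, 0, q.1 * sin q.2)) (by fun_prop)).measurable
  rw [← (measurePreserving_lineEquiv 0).lintegral_comp hg, ← lintegral_comp_polarCoord_symm,
    setLIntegral_congr (Ioo_ae_eq_Ioc (μ := volume) (a := -π) (b := π)).symm]
  have := (Measure.measurePreserving_neg (volume : Measure ℝ)).setLIntegral_comp_preimage_emb
    (MeasurableEquiv.neg ℝ).measurableEmbedding
    (fun θ => ∫⁻ r in Set.Ioi (0 : ℝ), ENNReal.ofReal r * g (r • perp θ)) (Set.Ioo (-π) π)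
  rw [← this]
  simp only [Set.neg_preimage, Set.neg_Ioo, neg_neg]
  simp only [polarCoord_target, polarCoord_symm_apply, lineEquiv_apply, hperp, smul_eq_mul]
  rw [Measure.volume_eq_prod, ← Measure.prod_restrict, lintegral_prod_symm' _ hmeas]

end Lines

section BoundedSupport

open scoped ENNReal FourierTransform

local notation "Plane" => EuclideanSpace ℝ (Fin 2)

variable {f : EuclideanSpace ℝ (Fin 2) → ℝ} {r C : ℝ}

theorem integrable_of_bounded_of_support_subset {α : Type*} [MeasurableSpace α] {μ : Measure α}
    {g : α → ℝ} {s : Set α} (hs : μ s ≠ ∞) (hg : Measurable g) (hC : ∀ x, ‖g x‖ ≤ C)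
    (hsupp : Function.support g ⊆ s) : Integrable g μ :=
  (integrableOn_iff_integrable_of_support_subset hsupp).1 <|
    Measure.integrableOn_of_bounded hs hg.aestronglyMeasurable (.of_forall hC)

theorem integrable_of_support_closedBall (hf : Measurable f) (hC : ∀ x, ‖f x‖ ≤ C)
    (hr : Function.support f ⊆ Metric.closedBall 0 r) : Integrable f :=
  integrable_of_bounded_of_support_subset measure_closedBall_lt_top.ne hf hC hr

theorem lintegral_enorm_sq_eq_ofReal_l2sq (hf : Measurable f) (hC : ∀ x, ‖f x‖ ≤ C)
    (hr : Function.support f ⊆ Metric.closedBall 0 r) :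
    ∫⁻ x, ‖f x‖ₑ ^ 2 = ENNReal.ofReal (l2sq f) := by
  have h := integrable_of_support_closedBall hf hC hr
  have hsq : Integrable fun x => f x ^ 2 := by
    simpa only [sq] using h.bdd_mul h.1 (.of_forall hC)
  rw [l2sq, ofReal_integral_eq_lintegral_ofReal hsq (.of_forall fun x => sq_nonneg _)]
  refine lintegral_congr fun x => ?_
  rw [← ofReal_norm, ← ENNReal.ofReal_pow (norm_nonneg _), Real.norm_eq_abs, sq_abs]

theorem measurable_linePt (s θ : ℝ) : Measurable (linePt s θ) := by
  have : Continuous (linePt s θ) := by unfold linePt; fun_prop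
  exact this.measurable

theorem support_comp_linePt_subset (hr : Function.support f ⊆ Metric.closedBall 0 r) (s θ : ℝ) :
    (Function.support fun t => f (linePt s θ t)) ⊆ Set.Icc (-r) r := fun t ht => by
  have h := hr (show linePt s θ t ∈ Function.support f from ht)
  rw [mem_closedBall_zero_iff] at h
  refine abs_le.1 ((abs_le_of_sq_le_sq ?_ (norm_nonneg _)).trans h)
  rw [norm_linePt_sq]
  nlinarith [sq_nonneg s]

theorem integrable_comp_linePt (hf : Measurable f) (hC : ∀ x, ‖f x‖ ≤ C)
    (hr : Function.support f ⊆ Metric.closedBall 0 r) (s θ : ℝ) :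
    Integrable fun t => f (linePt s θ t) :=
  integrable_of_bounded_of_support_subset (measure_Icc_lt_top (a := -r) (b := r)).ne
    (hf.comp (measurable_linePt s θ)) (fun _ => hC _) (support_comp_linePt_subset hr s θ)

theorem sq_lintegral_linePt_le (hf : Measurable f)
    (hr : Function.support f ⊆ Metric.closedBall 0 r) (s θ : ℝ) :
    (∫⁻ t, ‖f (linePt s θ t)‖ₑ) ^ 2 ≤
      ENNReal.ofReal (2 * r) * ∫⁻ t, ‖f (linePt s θ t)‖ₑ ^ 2 := by
  set I : ℝ → ℝ≥0∞ := (Set.Icc (-r) r).indicator 1 with hI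
  calc (∫⁻ t, ‖f (linePt s θ t)‖ₑ) ^ 2 = (∫⁻ t, I t * ‖f (linePt s θ t)‖ₑ) ^ 2 := by
        congr 1
        refine lintegral_congr fun t => ?_
        by_cases ht : t ∈ Set.Icc (-r) r
        · simp [hI, ht]
        · have : f (linePt s θ t) = 0 :=
            Function.notMem_support.1 fun h => ht (support_comp_linePt_subset hr s θ h)
          simp [this]
    _ ≤ (∫⁻ t, I t ^ 2) * ∫⁻ t, ‖f (linePt s θ t)‖ₑ ^ 2 :=
        sq_lintegral_mul_le (measurable_one.indicator measurableSet_Icc).aemeasurable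
          (hf.comp (measurable_linePt s θ)).enorm.aemeasurable
    _ = _ := by
        congr 1
        have : ∀ t, I t ^ 2 = I t := fun t => by
          by_cases ht : t ∈ Set.Icc (-r) r <;> simp [hI, ht]
        simp_rw [this]
        rw [hI, lintegral_indicator_one measurableSet_Icc, Real.volume_Icc]
        ring_nf

/-- The X-ray transform maps `L²` functions supported in a disc to `L⁴`. -/
theorem lintegral_xray_pow_four_le (hf : Measurable f) (h0 : ∀ x, 0 ≤ f x)
    (hC : ∀ x, ‖f x‖ ≤ C) (hr : Function.support f ⊆ Metric.closedBall 0 r) :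
    ∫⁻ θ in Set.Ioc (-π) π, ∫⁻ s, (∫⁻ t, ‖f (linePt s θ t)‖ₑ) ^ 4 ≤
      12 * ENNReal.ofReal (2 * r) * (∫⁻ x, ‖f x‖ₑ ^ 2) ^ 2 := by
  have hint := integrable_of_support_closedBall hf hC hr
  have hline := integrable_comp_linePt hf hC hr
  set F : Plane → ℂ := fun x => (f x : ℂ) with hF
  have hF1 : Integrable F := hint.ofReal
  have hF2 : MemLp F 2 := by
    refine MemLp.ofReal ((memLp_two_iff_integrable_sq hint.1).2 ?_)
    simpa only [sq] using hint.bdd_mul hint.1 (.of_forall hC)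
  have hFf : ∫⁻ x, ‖F x‖ₑ ^ 2 = ∫⁻ x, ‖f x‖ₑ ^ 2 :=
    lintegral_congr fun x => by rw [← ofReal_norm, ← ofReal_norm, Complex.norm_real]
  have hu : ∀ s θ, ‖∫ t, f (linePt s θ t)‖ₑ = ∫⁻ t, ‖f (linePt s θ t)‖ₑ := fun s θ => by
    rw [← ofReal_integral_norm_eq_lintegral_enorm (hline s θ), ← ofReal_norm,
      Real.norm_of_nonneg (integral_nonneg fun t => h0 _)]
    simp_rw [Real.norm_of_nonneg (h0 _)]
  have hbound : ∀ s θ, ‖∫ t, f (linePt s θ t)‖ ≤ C * (2 * |r|) := fun s θ => by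
    rw [← setIntegral_eq_integral_of_forall_compl_eq_zero (s := Set.Icc (-r) r) fun t ht =>
      Function.notMem_support.1 fun h => ht (support_comp_linePt_subset hr s θ h)]
    refine (norm_setIntegral_le_of_norm_le_const measure_Icc_lt_top fun t _ => hC _).trans ?_
    refine mul_le_mul_of_nonneg_left ?_ ((norm_nonneg _).trans (hC 0))
    rw [Real.volume_real_Icc]
    exact max_le (by linarith [le_abs_self r]) (by positivity)
  have hfin : 12 * (ENNReal.ofReal (2 * r) * ∫⁻ x, ‖f x‖ₑ ^ 2) ≠ ∞ := by
    rw [lintegral_enorm_sq_eq_ofReal_l2sq hf hC hr]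
    finiteness
  have hsec : ∀ θ, ∫⁻ s, (∫⁻ t, ‖f (linePt s θ t)‖ₑ) ^ 4 ≤
      (∫⁻ x in Set.Ioi 0, ENNReal.ofReal x * ‖𝓕 F (x • perp θ)‖ₑ ^ 2) *
        (12 * (ENNReal.ofReal (2 * r) * ∫⁻ x, ‖f x‖ₑ ^ 2)) := fun θ => by
    have h4 := lintegral_enorm_pow_four_le (integrable_linePt hint θ).integral_prod_left
      (hbound · θ)
    simp only [hu, fourier_integral_linePt hint] at h4
    refine h4.trans ?_
    rw [mul_comm 12, mul_assoc]
    gcongr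
    refine (lintegral_mono fun s => sq_lintegral_linePt_le hf hr s θ).trans_eq ?_
    rw [lintegral_const_mul' _ _ ENNReal.ofReal_ne_top, lintegral_linePt (hf.enorm.pow_const 2)]
  calc _ ≤ _ := lintegral_mono hsec
    _ = _ := by
      rw [lintegral_mul_const' _ _ hfin,
        lintegral_polar_perp ((continuous_fourier_of_integrable hF1).measurable.enorm.pow_const 2),
        lintegral_enorm_fourier_sq hF1 hF2, hFf]
      ring

end BoundedSupport

section OneSided

open scoped ENNReal

local notation "Plane" => EuclideanSpace ℝ (Fin 2)

theorem setLIntegral_Ioc_eq_of_periodic {F : ℝ → ℝ≥0∞} {T : ℝ} (hF : Function.Periodic F T)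
    (hT : 0 < T) (a b : ℝ) :
    ∫⁻ x in Set.Ioc a (a + T), F x = ∫⁻ x in Set.Ioc b (b + T), F x := by
  have : VAddInvariantMeasure (AddSubgroup.zmultiples T) ℝ volume :=
    ⟨fun c s _ => measure_preimage_add _ _ _⟩
  exact (isAddFundamentalDomain_Ioc hT a).setLIntegral_eq (isAddFundamentalDomain_Ioc hT b) F
    hF.map_vadd_zmultiples

theorem lintegral_half_lines_le {g : ℝ → ℝ≥0∞} (t : ℝ) :
    (∫⁻ τ in Set.Ioi 0, g (t + τ)) + ∫⁻ τ in Set.Ioi 0, g (t - τ) ≤ ∫⁻ τ, g τ := by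
  have h := (Measure.measurePreserving_neg (volume : Measure ℝ)).setLIntegral_comp_preimage_emb
    (MeasurableEquiv.neg ℝ).measurableEmbedding (fun τ => g (t + τ)) (Set.Iio 0)
  simp only [Set.neg_preimage, Set.neg_Iio, neg_zero, ← sub_eq_add_neg] at h
  have hdisj : Disjoint (Set.Ioi (0 : ℝ)) (Set.Iio 0) :=
    Set.disjoint_left.2 fun x hx hx' => lt_asymm (Set.mem_Ioi.1 hx) hx'
  rw [h, ← lintegral_union measurableSet_Iio hdisj, ← lintegral_add_left_eq_self g t]
  exact setLIntegral_le_lintegral _ _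

/-- The X-ray transform `(s, θ) ↦ ∫ f(sθ^⊥ + tθ) dt`. -/
def xray (f : Plane → ℝ≥0∞) (s θ : ℝ) : ℝ≥0∞ := ∫⁻ t, f (linePt s θ t)

/-- The transform `(s, θ) ↦ ∫ f(γ(t)) ∫₀^∞ g(γ(t + τ)) dτ dt` with `γ(t) = sθ^⊥ + tθ`. -/
def xrayBeam (f g : Plane → ℝ≥0∞) (s θ : ℝ) : ℝ≥0∞ :=
  ∫⁻ t, f (linePt s θ t) * ∫⁻ τ in Set.Ioi 0, g (linePt s θ (t + τ))

theorem measurable_xray {f : Plane → ℝ≥0∞} (hf : Measurable f) :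
    Measurable fun q : ℝ × ℝ => xray f q.2 q.1 := by
  have : Measurable fun q : (ℝ × ℝ) × ℝ => f (linePt q.1.2 q.1.1 q.2) :=
    hf.comp (continuous_linePt.comp (g := fun q : ℝ × ℝ × ℝ => linePt q.1 q.2.1 q.2.2)
      (f := fun q : (ℝ × ℝ) × ℝ => (q.1.2, q.1.1, q.2)) (by fun_prop)).measurable
  exact this.lintegral_prod_right'

theorem xrayBeam_add_two_pi (f g : Plane → ℝ≥0∞) (s θ : ℝ) :
    xrayBeam f g s (θ + 2 * π) = xrayBeam f g s θ := by
  simp only [xrayBeam, linePt_add_two_pi]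

/-- Reversing the orientation of a line exchanges its two half-lines. -/
theorem xrayBeam_add_xrayBeam_le {f : Plane → ℝ≥0∞} (hf : Measurable f) (g : Plane → ℝ≥0∞)
    (s θ : ℝ) :
    xrayBeam f g s θ + xrayBeam f g (-s) (θ + π) ≤ xray f s θ * xray g s θ := by
  have h : xrayBeam f g (-s) (θ + π) =
      ∫⁻ t, f (linePt s θ t) * ∫⁻ τ in Set.Ioi 0, g (linePt s θ (t - τ)) := by
    rw [xrayBeam, ← lintegral_neg_eq_self]
    simp only [linePt_add_pi, neg_neg, neg_add, sub_eq_add_neg]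
  have hm : Measurable fun t => f (linePt s θ t) := hf.comp (measurable_linePt s θ)
  rw [h, xrayBeam, xray, ← lintegral_mul_const _ hm]
  refine (le_lintegral_add _ _).trans (lintegral_mono fun t => ?_)
  rw [← mul_add]
  gcongr
  exact lintegral_half_lines_le (g := fun t => g (linePt s θ t)) t

theorem two_mul_lintegral_sq_xrayBeam_le {f : Plane → ℝ≥0∞} (hf : Measurable f)
    (g : Plane → ℝ≥0∞) :
    2 * ∫⁻ θ in Set.Ioc 0 (2 * π), ∫⁻ s, xrayBeam f g s θ ^ 2 ≤
      ∫⁻ θ in Set.Ioc (-π) π, ∫⁻ s, xray f s θ ^ 2 * xray g s θ ^ 2 := by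
  set Φ : ℝ → ℝ≥0∞ := fun θ => ∫⁻ s, xrayBeam f g s θ ^ 2 with hΦ
  have hper : Function.Periodic Φ (2 * π) := fun θ => by simp only [hΦ, xrayBeam_add_two_pi]
  have h1 : ∫⁻ θ in Set.Ioc (-π) π, Φ θ = ∫⁻ θ in Set.Ioc 0 (2 * π), Φ θ := by
    have := setLIntegral_Ioc_eq_of_periodic hper two_pi_pos (-π) 0
    rwa [zero_add, show -π + 2 * π = π by ring] at this
  have h2 : ∫⁻ θ in Set.Ioc (-π) π, Φ (θ + π) = ∫⁻ θ in Set.Ioc 0 (2 * π), Φ θ := by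
    have := (measurePreserving_add_right (volume : Measure ℝ) π).setLIntegral_comp_preimage_emb
      (measurableEmbedding_addRight π) Φ (Set.Ioc 0 (2 * π))
    rw [← this, Set.preimage_add_const_Ioc, zero_sub, show 2 * π - π = π by ring]
  have h3 : ∀ θ, Φ (θ + π) = ∫⁻ s, xrayBeam f g (-s) (θ + π) ^ 2 := fun θ =>
    (lintegral_neg_eq_self (μ := volume) fun s => xrayBeam f g s (θ + π) ^ 2).symm
  rw [two_mul]
  nth_rewrite 1 [← h1]
  rw [← h2]
  refine (le_lintegral_add _ _).trans (lintegral_mono fun θ => ?_)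
  simp only [h3]
  refine (le_lintegral_add _ _).trans (lintegral_mono fun s => ?_)
  rw [← mul_pow]
  refine le_trans ?_ (pow_le_pow_left₀ zero_le (xrayBeam_add_xrayBeam_le hf g s θ) 2)
  rw [add_sq, add_right_comm]
  exact le_self_add

theorem sq_lintegral_xray_mul_le {f g : Plane → ℝ≥0∞} (hf : Measurable f) (hg : Measurable g) :
    (∫⁻ θ in Set.Ioc (-π) π, ∫⁻ s, xray f s θ ^ 2 * xray g s θ ^ 2) ^ 2 ≤
      (∫⁻ θ in Set.Ioc (-π) π, ∫⁻ s, xray f s θ ^ 4) *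
        ∫⁻ θ in Set.Ioc (-π) π, ∫⁻ s, xray g s θ ^ 4 := by
  have hF := measurable_xray hf
  have hG := measurable_xray hg
  have h := sq_lintegral_mul_le (μ := (volume.restrict (Set.Ioc (-π) π)).prod volume)
    (hF.pow_const 2).aemeasurable (hG.pow_const 2).aemeasurable
  simp only [← pow_mul, Nat.reduceMul] at h
  have hFG : Measurable fun q : ℝ × ℝ => xray f q.2 q.1 ^ 2 * xray g q.2 q.1 ^ 2 :=
    (hF.pow_const 2).mul (hG.pow_const 2)
  rwa [lintegral_prod _ hFG.aemeasurable,
    lintegral_prod _ (hF.pow_const 4).aemeasurable,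
    lintegral_prod _ (hG.pow_const 4).aemeasurable] at h

end OneSided

section Attenuated

open scoped ENNReal

variable {f m m₁ m₂ : EuclideanSpace ℝ (Fin 2) → ℝ} {r C : ℝ}

theorem abs_exp_neg_sub_exp_neg_le {u v : ℝ} (hu : 0 ≤ u) (hv : 0 ≤ v) :
    |exp (-u) - exp (-v)| ≤ |u - v| := by
  wlog huv : u ≤ v generalizing u v
  · rw [abs_sub_comm, abs_sub_comm u]
    exact this hv hu (le_of_not_ge huv)
  have h1 : exp (-v) ≤ exp (-u) := exp_le_exp.2 (neg_le_neg huv)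
  rw [abs_of_nonneg (sub_nonneg.2 h1), abs_sub_comm, abs_of_nonneg (sub_nonneg.2 huv)]
  have h2 : exp (-v) = exp (-u) * exp (-(v - u)) := by rw [← exp_add]; ring_nf
  have h3 : exp (-u) ≤ 1 := exp_le_one_iff.2 (neg_nonpos.2 hu)
  have h4 := add_one_le_exp (-(v - u))
  nlinarith [exp_pos (-u)]

theorem beam_linePt (m : EuclideanSpace ℝ (Fin 2) → ℝ) (s θ t : ℝ) :
    beam m (linePt s θ t) θ = ∫ τ in Set.Ioi 0, m (linePt s θ (t + τ)) := by
  simp only [beam, linePt_add_smul_dir]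

theorem measurable_beam_linePt (hm : Measurable m) (s θ : ℝ) :
    Measurable fun t => beam m (linePt s θ t) θ := by
  simp only [beam_linePt]
  have : Measurable fun q : ℝ × ℝ => m (linePt s θ (q.1 + q.2)) :=
    hm.comp ((measurable_linePt s θ).comp (measurable_fst.add measurable_snd))
  exact this.stronglyMeasurable.integral_prod_right.measurable

theorem beam_nonneg (h0 : ∀ x, 0 ≤ m x) (x : EuclideanSpace ℝ (Fin 2)) (θ : ℝ) :
    0 ≤ beam m x θ :=
  integral_nonneg fun _ => h0 _

theorem integrable_radonF_integrand (hf : Integrable fun t => f (linePt s θ t))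
    (hm : Measurable m) (h0 : ∀ x, 0 ≤ m x) :
    Integrable fun t => f (linePt s θ t) * exp (-(beam m (linePt s θ t) θ)) := by
  refine hf.mul_bdd (c := 1) (measurable_beam_linePt hm s θ).neg.exp.aestronglyMeasurable
    (.of_forall fun t => ?_)
  rw [norm_of_nonneg (exp_pos _).le]
  exact exp_le_one_iff.2 (neg_nonpos.2 (beam_nonneg h0 _ _))

theorem enorm_radonF_sub_le {s θ : ℝ} (hf : Integrable fun t => f (linePt s θ t))
    (hm₁ : Measurable m₁) (hm₂ : Measurable m₂) (h₁ : ∀ x, 0 ≤ m₁ x) (h₂ : ∀ x, 0 ≤ m₂ x)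
    (hi₁ : Integrable fun t => m₁ (linePt s θ t)) (hi₂ : Integrable fun t => m₂ (linePt s θ t)) :
    ‖radonF f m₁ s θ - radonF f m₂ s θ‖ₑ ≤
      xrayBeam (fun x => ‖f x‖ₑ) (fun x => ‖m₂ x - m₁ x‖ₑ) s θ := by
  rw [radonF, radonF, ← integral_sub (integrable_radonF_integrand hf hm₁ h₁)
    (integrable_radonF_integrand hf hm₂ h₂)]
  refine (enorm_integral_le_lintegral_enorm _).trans (lintegral_mono fun t => ?_)
  rw [← mul_sub, enorm_mul]
  gcongr
  calc ‖exp (-(beam m₁ (linePt s θ t) θ)) - exp (-(beam m₂ (linePt s θ t) θ))‖ₑ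
      ≤ ‖beam m₁ (linePt s θ t) θ - beam m₂ (linePt s θ t) θ‖ₑ :=
        enorm_le_iff_norm_le.2
          (abs_exp_neg_sub_exp_neg_le (beam_nonneg h₁ _ _) (beam_nonneg h₂ _ _))
    _ = ‖beam m₂ (linePt s θ t) θ - beam m₁ (linePt s θ t) θ‖ₑ := enorm_sub_rev _ _
    _ ≤ _ := by
      rw [beam_linePt, beam_linePt, ← integral_sub (hi₂.comp_add_left t).integrableOn
        (hi₁.comp_add_left t).integrableOn]
      exact enorm_integral_le_lintegral_enorm _

theorem ofReal_dataNormSq_le (G : ℝ → ℝ → ℝ) :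
    ENNReal.ofReal (dataNormSq G) ≤ ∫⁻ θ in Set.Ioc 0 (2 * π), ∫⁻ s, ‖G s θ‖ₑ ^ 2 := by
  rw [dataNormSq, intervalIntegral.integral_of_le two_pi_pos.le]
  refine (Real.ofReal_le_enorm _).trans ?_
  refine (enorm_integral_le_lintegral_enorm _).trans (lintegral_mono fun θ => ?_)
  refine (enorm_integral_le_lintegral_enorm _).trans_eq (lintegral_congr fun s => ?_)
  exact enorm_pow _ _

theorem lintegral_sq_xrayBeam_le (hf : Measurable f) (hm : Measurable m) {D : ℝ}
    (h0 : ∀ x, 0 ≤ f x) (hC : ∀ x, ‖f x‖ ≤ C) (hD : ∀ x, ‖m x‖ ≤ D)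
    (hfr : Function.support f ⊆ Metric.closedBall 0 r)
    (hmr : Function.support m ⊆ Metric.closedBall 0 r) :
    ∫⁻ θ in Set.Ioc 0 (2 * π), ∫⁻ s,
        xrayBeam (fun x => ‖f x‖ₑ) (fun x => ‖m x‖ₑ) s θ ^ 2 ≤
      12 * ENNReal.ofReal r * ENNReal.ofReal (l2sq f) * ENNReal.ofReal (l2sq m) := by
  have hF := lintegral_xray_pow_four_le hf h0 hC hfr
  have hM := lintegral_xray_pow_four_le (f := fun x => ‖m x‖) hm.norm (fun x => norm_nonneg _)
    (fun x => (norm_norm _).trans_le (hD x)) (fun x hx => hmr (norm_ne_zero_iff.1 hx))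
  simp only [enorm_norm] at hM
  rw [lintegral_enorm_sq_eq_ofReal_l2sq hf hC hfr] at hF
  rw [lintegral_enorm_sq_eq_ofReal_l2sq hm hD hmr] at hM
  have h := (sq_lintegral_xray_mul_le hf.enorm hm.enorm).trans (mul_le_mul' hF hM)
  rw [show ∀ a b c : ℝ≥0∞, a * b ^ 2 * (a * c ^ 2) = (a * b * c) ^ 2 by intros; ring,
    ENNReal.pow_le_pow_left_iff two_ne_zero] at h
  have h2 := (two_mul_lintegral_sq_xrayBeam_le hf.enorm _).trans h
  rw [ENNReal.ofReal_mul zero_le_two, ENNReal.ofReal_ofNat,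
    show ∀ a b c : ℝ≥0∞, 12 * (2 * a) * b * c = 2 * (12 * a * b * c) by intros; ring] at h2
  exact (ENNReal.mul_le_mul_iff_right two_ne_zero ENNReal.ofNat_ne_top).1 h2

end Attenuated

/-- First-term estimate in the Lipschitz bound for the Fréchet derivative of the
attenuated Radon transform:
`‖F(δλ, μ₁) − F(δλ, μ₂)‖² ≤ 4π rΩ ‖δλ‖² ‖μ₂ − μ₁‖²`. -/
theorem first_term_estimate (rΩ : ℝ) (hr : 0 < rΩ)
    (dlam mu1 mu2 : EuclideanSpace ℝ (Fin 2) → ℝ)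
    (hdlam : Admissible rΩ dlam) (hmu1 : Admissible rΩ mu1) (hmu2 : Admissible rΩ mu2) :
    dataNormSq (fun s θ => radonF dlam mu1 s θ - radonF dlam mu2 s θ) ≤
      4 * π * rΩ * l2sq dlam * l2sq (fun x => mu2 x - mu1 x) := by
  obtain ⟨hlm, hl0, ⟨C, hC⟩, hlr⟩ := hdlam
  obtain ⟨hm₁, h₁, ⟨C₁, hC₁⟩, hr₁⟩ := hmu1
  obtain ⟨hm₂, h₂, ⟨C₂, hC₂⟩, hr₂⟩ := hmu2
  have hC' : ∀ x, ‖dlam x‖ ≤ C := fun x => by rw [norm_of_nonneg (hl0 x)]; exact hC x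
  have hC₁' : ∀ x, ‖mu1 x‖ ≤ C₁ := fun x => by rw [norm_of_nonneg (h₁ x)]; exact hC₁ x
  have hC₂' : ∀ x, ‖mu2 x‖ ≤ C₂ := fun x => by rw [norm_of_nonneg (h₂ x)]; exact hC₂ x
  have hl2 : ∀ f, 0 ≤ l2sq f := fun f => integral_nonneg fun x => sq_nonneg _
  have hle : dataNormSq (fun s θ => radonF dlam mu1 s θ - radonF dlam mu2 s θ) ≤
      12 * rΩ * l2sq dlam * l2sq (fun x => mu2 x - mu1 x) := by
    refine (ENNReal.ofReal_le_ofReal_iff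
      (mul_nonneg (mul_nonneg (by positivity) (hl2 _)) (hl2 _))).1 ?_
    rw [ENNReal.ofReal_mul (mul_nonneg (by positivity) (hl2 _)),
      ENNReal.ofReal_mul (by positivity), ENNReal.ofReal_mul (by norm_num), ENNReal.ofReal_ofNat]
    refine (ofReal_dataNormSq_le _).trans <| le_trans ?_ <|
      lintegral_sq_xrayBeam_le hlm (hm₂.sub hm₁) hl0 hC'
        (fun x => (norm_sub_le _ _).trans (add_le_add (hC₂' x) (hC₁' x))) hlr
        ((Function.support_sub mu2 mu1).trans (Set.union_subset hr₂ hr₁))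
    refine lintegral_mono fun θ => lintegral_mono fun s => pow_le_pow_left₀ zero_le ?_ 2
    exact enorm_radonF_sub_le (integrable_comp_linePt hlm hC' hlr s θ) hm₁ hm₂ h₁ h₂
      (integrable_comp_linePt hm₁ hC₁' hr₁ s θ) (integrable_comp_linePt hm₂ hC₂' hr₂ s θ)
  refine hle.trans ?_
  gcongr
  · exact hl2 _
  · exact hl2 _
  · linarith [pi_gt_three]

end
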